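/- Let G be a strongly connected countable directed graph, F : E → ℝ a function and β ∈ ℝ. Then A(β) is recurrent if and only if Σ_{k≥1} l^k_{vv}(β) ≥ 1 for some (and hence every) vertex v ∈ V, and A(β) is transient if and only if Σ_{k≥1} l^k_{vv}(β) < 1 for some (and hence every) vertex v ∈ V. -/

import Mathlib

open scoped ENNReal NNReal Classical
open Filter MeasureTheory

/-- A countable directed graph: countable sets of vertices and edges with
source and range maps. -/
structure DirGraph where
  V : Type
  E : Type
  countV : Countable V
  countE : Countable E
  s : E → V
  r : E → V

namespace DirGraph

attribute [instance] countV countE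

variable (G : DirGraph)

/-- `μ` is a finite path (a vertex counts as the empty path). -/
def IsPath (μ : List G.E) : Prop := μ.Chain' (fun e f => G.r e = G.s f)

/-- `μ` is a finite path from `u` to `w`. -/
def IsPathFrom (μ : List G.E) (u w : G.V) : Prop :=
  G.IsPath μ ∧ (∀ e ∈ μ.head?, G.s e = u) ∧ (∀ e ∈ μ.getLast?, G.r e = w) ∧ (μ = [] → u = w)

/-- A function `F : E → ℝ` extended to finite paths. -/
def Fsum (F : G.E → ℝ) (μ : List G.E) : ℝ := (μ.map F).sum

/-- The matrix `A(β)` over the vertices, with entries in `[0,∞]`: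
`A(β)_{uw} = Σ_{e : u → w} e^{-β F(e)}`. -/
noncomputable def Amat (F : G.E → ℝ) (β : ℝ) (u w : G.V) : ℝ≥0∞ :=
  ∑' e : {e : G.E // G.s e = u ∧ G.r e = w}, ENNReal.ofReal (Real.exp (-β * F e.1))

/-- The powers of the matrix `A(β)`, defined recursively; `A(β)⁰` is the identity matrix. -/
noncomputable def Apow (F : G.E → ℝ) (β : ℝ) : ℕ → G.V → G.V → ℝ≥0∞
  | 0, u, w => if u = w then 1 else 0
  | n + 1, u, w => ∑' x : G.V, G.Amat F β u x * Apow F β n x w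

/-- A sink is a vertex emitting no edges. -/
def IsSink (v : G.V) : Prop := ∀ e : G.E, G.s e ≠ v

/-- An infinite emitter is a vertex emitting infinitely many edges. -/
def InfEmitter (v : G.V) : Prop := {e : G.E | G.s e = v}.Infinite

/-- A set of vertices is hereditary when it is closed under following edges. -/
def Hereditary (H : Set G.V) : Prop := ∀ e : G.E, G.s e ∈ H → G.r e ∈ H

/-- A set of vertices `H` is saturated when every vertex of `V ∖ V∞` all of whose
successors lie in `H` belongs to `H`. -/
def Saturated (H : Set G.V) : Prop :=
  ∀ v : G.V, ¬ G.IsSink v → ¬ G.InfEmitter v → (∀ e : G.E, G.s e = v → G.r e ∈ H) → v ∈ H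

/-- `G` is cofinal when the only nonempty hereditary and saturated set of
vertices is the whole vertex set. -/
def Cofinal : Prop :=
  ∀ H : Set G.V, H.Nonempty → G.Hereditary H → G.Saturated H → H = Set.univ

/-- The set of non-wandering vertices: those lying on a loop of length ≥ 1. -/
def NW : Set G.V := {v | ∃ μ : List G.E, μ ≠ [] ∧ G.IsPathFrom μ v v}

/-- `G` is strongly connected when there is a finite path between any two vertices. -/
def StronglyConnected : Prop := ∀ u w : G.V, ∃ μ : List G.E, G.IsPathFrom μ u w

/-- `G` is row-finite when every vertex emits only finitely many edges. -/
def RowFinite : Prop := ∀ v : G.V, {e : G.E | G.s e = v}.Finite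

/-- `ψ` is an `A(β)`-harmonic vector. -/
def Harmonic (F : G.E → ℝ) (β : ℝ) (ψ : G.V → ℝ≥0) : Prop :=
  ∀ v : G.V, ∑' w : G.V, G.Amat F β v w * ψ w = (ψ v : ℝ≥0∞)

/-- `A(β)` is transient when `Σ_n A(β)ⁿ_{vv} < ∞` for every vertex. -/
def Transient (F : G.E → ℝ) (β : ℝ) : Prop :=
  ∀ v : G.V, ∑' n : ℕ, G.Apow F β n v v ≠ ⊤

/-- `A(β)` is recurrent when `Σ_n A(β)ⁿ_{vv} = ∞` for some vertex. -/
def Recurrent (F : G.E → ℝ) (β : ℝ) : Prop :=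
  ∃ v : G.V, ∑' n : ℕ, G.Apow F β n v v = ⊤

/-- An exit path: a sequence of vertices joined by edges which leaves every
finite set of vertices. -/
def IsExitPath (t : ℕ → G.V) : Prop :=
  (∀ i : ℕ, ∃ e : G.E, G.s e = t i ∧ G.r e = t (i + 1)) ∧
  ∀ M : Set G.V, M.Finite → ∃ N : ℕ, ∀ i : ℕ, N ≤ i → t i ∉ M

/-- Tail equivalence of vertex sequences. -/
def TailEquiv (t t' : ℕ → G.V) : Prop :=
  ∃ k : ℤ, ∃ N : ℕ, ∀ i : ℕ, N ≤ i → 0 ≤ (i : ℤ) + k ∧ t ((i : ℤ) + k).toNat = t' i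

/-- A simple loop based at `v`: a loop which returns to `v` only at the very end. -/
def IsSimpleLoop (v : G.V) (μ : List G.E) : Prop :=
  μ ≠ [] ∧ G.IsPathFrom μ v v ∧
  ∀ (i : ℕ) (h : i + 1 < μ.length), G.r (μ.get ⟨i, Nat.lt_of_succ_lt h⟩) ≠ v

/-- `lⁿ_{vv}(β)`: the weighted number of simple loops of length `n` based at `v`. -/
noncomputable def loopSum (F : G.E → ℝ) (β : ℝ) (v : G.V) (n : ℕ) : ℝ≥0∞ :=
  ∑' μ : {μ : List G.E // μ.length = n ∧ G.IsSimpleLoop v μ},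
    ENNReal.ofReal (Real.exp (-β * G.Fsum F μ.1))

/-- The space `P(G)` of infinite paths in `G`. -/
def PathSpace : Type := {p : ℕ → G.E // ∀ i : ℕ, G.r (p i) = G.s (p (i + 1))}

/-- The Borel σ-algebra of `P(G)` as a subspace of the product `E^ℕ` with `E`
discrete (for a countable discrete space, the Borel σ-algebra is the power set). -/
instance : MeasurableSpace G.PathSpace :=
  letI : MeasurableSpace G.E := ⊤
  inferInstanceAs (MeasurableSpace {p : ℕ → G.E // ∀ i : ℕ, G.r (p i) = G.s (p (i + 1))})

/-- The cylinder set `Z'(v)` of infinite paths starting at the vertex `v`. -/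
def cylV (v : G.V) : Set G.PathSpace := {p | G.s (p.1 0) = v}

/-- The cylinder set `Z'(μ)` of infinite paths beginning with the finite path `μ`. -/
def cylP (μ : List G.E) : Set G.PathSpace :=
  {p | ∀ (i : ℕ) (h : i < μ.length), p.1 i = μ.get ⟨i, h⟩}

/-- The set `P(G)_wan` of wandering infinite paths: those visiting each vertex
only finitely many times. -/
def wanSet : Set G.PathSpace := {p | ∀ v : G.V, {i : ℕ | G.s (p.1 i) = v}.Finite}

end DirGraph

/-! Split a nonempty path ending at `v` at its first arrival at `v`: with `a n = A(β)ⁿ_{vv}` and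
`l n = lⁿ_{vv}(β)` this gives the renewal equation `a (n + 1) = ∑_{i + j = n} l (i + 1) * a j`.
Summing it, `S = ∑ a n` is the least solution of `S = 1 + L * S`, where `L = ∑ l n`, so
`S = ∑ Lʲ = (1 - L)⁻¹`, which is infinite exactly when `1 ≤ L`. Paths from `v` to `u` and back
bound the series at `v` below by a positive multiple of the series at `u`, so that all vertices of
a strongly connected graph behave alike. -/

section Renewal

open Finset

theorem sum_range_sum_antidiagonal_mul_le {R : Type*} [CommSemiring R] [PartialOrder R]
    [CanonicallyOrderedAdd R] [IsOrderedRing R] (f g : ℕ → R) (N : ℕ) :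
    ∑ n ∈ range N, ∑ p ∈ antidiagonal n, f p.1 * g p.2 ≤
      (∑ i ∈ range N, f i) * ∑ j ∈ range N, g j := by
  simp_rw [Nat.sum_antidiagonal_eq_sum_range_succ fun i j => f i * g j]
  rw [sum_range_diag_flip N fun i j => f i * g j, sum_mul_sum]
  gcongr
  exact Nat.sub_le _ _

theorem tsum_sum_antidiagonal_mul {A : Type*} [AddMonoid A] [HasAntidiagonal A] (f g : A → ℝ≥0∞) :
    ∑' n, ∑ p ∈ antidiagonal n, f p.1 * g p.2 = (∑' i, f i) * ∑' j, g j := by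
  calc ∑' n, ∑ p ∈ antidiagonal n, f p.1 * g p.2
      = ∑' x : Σ n, antidiagonal n, f x.2.1.1 * g x.2.1.2 := by
        rw [ENNReal.tsum_sigma']
        exact tsum_congr fun n => (Finset.tsum_subtype _ fun p : A × A => f p.1 * g p.2).symm
    _ = ∑' p : A × A, f p.1 * g p.2 :=
        HasAntidiagonal.sigmaAntidiagonalEquivProd.tsum_eq fun p : A × A => f p.1 * g p.2
    _ = (∑' i, f i) * ∑' j, g j := by
        rw [ENNReal.tsum_prod']
        simp_rw [ENNReal.tsum_mul_left, ENNReal.tsum_mul_right]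

variable {a l : ℕ → ℝ≥0∞}

theorem sum_range_le_geom_sum_of_renewal (h_zero : a 0 = 1)
    (h_succ : ∀ n, a (n + 1) = ∑ p ∈ antidiagonal n, l p.1 * a p.2) (N : ℕ) :
    ∑ n ∈ range N, a n ≤ ∑ j ∈ range N, (∑' k, l k) ^ j := by
  induction N with
  | zero => simp
  | succ N ih =>
    rw [sum_range_succ', geom_sum_succ, h_zero]
    simp_rw [h_succ]
    gcongr
    exact (sum_range_sum_antidiagonal_mul_le l a N).trans (mul_le_mul' (ENNReal.sum_le_tsum _) ih)

theorem geom_sum_le_tsum_of_renewal (h_zero : a 0 = 1)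
    (h_succ : ∀ n, a (n + 1) = ∑ p ∈ antidiagonal n, l p.1 * a p.2) (N : ℕ) :
    ∑ j ∈ range N, (∑' k, l k) ^ j ≤ ∑' n, a n := by
  have h_fix : ∑' n, a n = 1 + (∑' k, l k) * ∑' n, a n := by
    rw [← tsum_sum_antidiagonal_mul, tsum_eq_zero_add' ENNReal.summable, h_zero]
    simp_rw [h_succ]
  induction N with
  | zero => simp
  | succ N ih =>
    rw [geom_sum_succ, h_fix, add_comm]
    gcongr

theorem tsum_eq_inv_one_sub_tsum_of_renewal (h_zero : a 0 = 1)
    (h_succ : ∀ n, a (n + 1) = ∑ p ∈ antidiagonal n, l p.1 * a p.2) :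
    ∑' n, a n = (1 - ∑' k, l k)⁻¹ := by
  rw [← ENNReal.tsum_geometric]
  apply le_antisymm <;> refine ENNReal.tsum_le_of_sum_range_le fun N => ?_
  · exact (sum_range_le_geom_sum_of_renewal h_zero h_succ N).trans (ENNReal.sum_le_tsum _)
  · exact geom_sum_le_tsum_of_renewal h_zero h_succ N

end Renewal

theorem tsum_subtype_eq_tsum_ite {α M : Type*} [AddCommMonoid M] [TopologicalSpace M]
    (p : α → Prop) [DecidablePred p] (f : α → M) :
    ∑' x : {x // p x}, f x = ∑' x, if p x then f x else 0 :=
  (tsum_subtype {x | p x} f).trans <| by simp [Set.indicator_apply]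

theorem tsum_list_eq_add_tsum_cons {α : Type*} (f : List α → ℝ≥0∞) :
    ∑' μ, f μ = f [] + ∑' e, ∑' μ, f (e :: μ) := by
  let nilOrCons : Unit ⊕ α × List α ≃ List α :=
    { toFun := Sum.elim (fun _ => []) fun x => x.1 :: x.2
      invFun := fun
        | [] => Sum.inl ()
        | e :: μ => Sum.inr (e, μ)
      left_inv := by rintro (_ | _) <;> rfl
      right_inv := by rintro (_ | _) <;> rfl }
  rw [← nilOrCons.tsum_eq, Summable.tsum_sum ENNReal.summable ENNReal.summable, tsum_fintype,
    Fintype.sum_unique, ENNReal.tsum_prod']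
  rfl

/-- The weight `e^{-βt}` of an edge or path on which the potential `F` takes the value `t`. -/
noncomputable def gibbsWeight (β t : ℝ) : ℝ≥0∞ := ENNReal.ofReal (Real.exp (-β * t))

theorem gibbsWeight_add (β t t' : ℝ) :
    gibbsWeight β (t + t') = gibbsWeight β t * gibbsWeight β t' := by
  simp only [gibbsWeight, mul_add, Real.exp_add, ENNReal.ofReal_mul (Real.exp_nonneg _)]

theorem gibbsWeight_ne_zero (β t : ℝ) : gibbsWeight β t ≠ 0 := by
  simp [gibbsWeight, Real.exp_pos]

namespace DirGraph

variable {G : DirGraph}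

theorem isPath_iff_isChain {μ : List G.E} :
    G.IsPath μ ↔ μ.IsChain fun e f => G.r e = G.s f :=
  Iff.rfl

theorem isPathFrom_nil {u w : G.V} : G.IsPathFrom [] u w ↔ u = w := by
  simp [IsPathFrom, isPath_iff_isChain]

theorem isPathFrom_cons {e : G.E} {μ : List G.E} {u w : G.V} :
    G.IsPathFrom (e :: μ) u w ↔ G.s e = u ∧ G.IsPathFrom μ (G.r e) w := by
  cases μ with
  | nil => simp [IsPathFrom, isPath_iff_isChain]
  | cons f μ =>
    simp only [IsPathFrom, isPath_iff_isChain, List.isChain_cons_cons, eq_comm (a := G.r e),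
      List.head?_cons, Option.mem_def, Option.some.injEq, forall_eq', List.getLast?_cons_cons,
      reduceCtorEq, IsEmpty.forall_iff, and_true]
    tauto

theorem Fsum_cons (F : G.E → ℝ) (e : G.E) (μ : List G.E) :
    G.Fsum F (e :: μ) = F e + G.Fsum F μ := by
  simp [Fsum]

/-- `μ` is a nonempty path from `u` to `v` which arrives at `v` only at its very end; its source
`u` may be `v` itself, in which case `μ` is a simple loop. -/
def IsFirstPassage (μ : List G.E) (u v : G.V) : Prop :=
  μ ≠ [] ∧ G.IsPathFrom μ u v ∧
  ∀ (i : ℕ) (h : i + 1 < μ.length), G.r (μ.get ⟨i, Nat.lt_of_succ_lt h⟩) ≠ v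

theorem isFirstPassage_singleton {e : G.E} {u v : G.V} :
    IsFirstPassage [e] u v ↔ G.s e = u ∧ G.r e = v := by
  simp [IsFirstPassage, isPathFrom_cons, isPathFrom_nil]

theorem isFirstPassage_cons {e : G.E} {μ : List G.E} {u v : G.V} (hμ : μ ≠ []) :
    IsFirstPassage (e :: μ) u v ↔ G.s e = u ∧ G.r e ≠ v ∧ IsFirstPassage μ (G.r e) v := by
  simp only [IsFirstPassage, isPathFrom_cons, ne_eq, reduceCtorEq, not_false_eq_true, true_and, hμ]
  constructor
  · rintro ⟨⟨hs, h_path⟩, h_avoid⟩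
    exact ⟨hs, h_avoid 0 (by simpa using List.length_pos_of_ne_nil hμ), h_path,
      fun i h => h_avoid (i + 1) (by simpa using h)⟩
  · rintro ⟨hs, hr, h_path, h_avoid⟩
    refine ⟨⟨hs, h_path⟩, fun i h => ?_⟩
    cases i with
    | zero => exact hr
    | succ i => exact h_avoid i (by simpa using h)

variable (F : G.E → ℝ) (β : ℝ)

theorem Amat_eq_tsum_ite (u x : G.V) :
    G.Amat F β u x = ∑' e, if G.s e = u ∧ G.r e = x then gibbsWeight β (F e) else 0 :=
  tsum_subtype_eq_tsum_ite (fun e => G.s e = u ∧ G.r e = x) fun e => gibbsWeight β (F e)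

theorem tsum_Amat_mul (u : G.V) (c : G.V → ℝ≥0∞) :
    ∑' x, G.Amat F β u x * c x =
      ∑' e, if G.s e = u then gibbsWeight β (F e) * c (G.r e) else 0 := by
  simp_rw [Amat_eq_tsum_ite, ← ENNReal.tsum_mul_right]
  rw [ENNReal.tsum_comm]
  refine tsum_congr fun e => ?_
  rw [tsum_eq_single (G.r e) fun x hx => by simp [hx.symm]]
  simp [ite_mul]

theorem Apow_add (m n : ℕ) (u w : G.V) :
    G.Apow F β (m + n) u w = ∑' x, G.Apow F β m u x * G.Apow F β n x w := by
  induction m generalizing u with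
  | zero => simp [Apow]
  | succ m ih =>
    rw [Nat.succ_add]
    simp only [Apow, ih, ← ENNReal.tsum_mul_left, ← ENNReal.tsum_mul_right, mul_assoc]
    exact ENNReal.tsum_comm

theorem Apow_mul_Apow_le (m n : ℕ) (u x w : G.V) :
    G.Apow F β m u x * G.Apow F β n x w ≤ G.Apow F β (m + n) u w := by
  rw [Apow_add]
  exact ENNReal.le_tsum (f := fun x => G.Apow F β m u x * G.Apow F β n x w) x

variable {F β} in
theorem IsPathFrom.Apow_length_ne_zero {μ : List G.E} {u w : G.V} (hμ : G.IsPathFrom μ u w) :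
    G.Apow F β μ.length u w ≠ 0 := by
  induction μ generalizing u with
  | nil => simp [Apow, isPathFrom_nil.1 hμ]
  | cons e μ ih =>
    obtain ⟨hs, hμ⟩ := isPathFrom_cons.1 hμ
    rw [List.length_cons, Apow, tsum_Amat_mul]
    refine fun h => mul_ne_zero (gibbsWeight_ne_zero β (F e)) (ih hμ) ?_
    simpa [hs] using ENNReal.tsum_eq_zero.1 h e

/-- The total weight of the first-passage paths of length `n` from `u` to `v`, which extends
`lⁿ_{vv}(β)` off the diagonal. -/
noncomputable def firstPassageSum (n : ℕ) (u v : G.V) : ℝ≥0∞ :=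
  ∑' μ : {μ : List G.E // μ.length = n ∧ IsFirstPassage μ u v}, gibbsWeight β (G.Fsum F μ.1)

theorem loopSum_eq_firstPassageSum (v : G.V) (n : ℕ) :
    G.loopSum F β v n = firstPassageSum F β n v v :=
  rfl

theorem firstPassageSum_eq_tsum_ite (n : ℕ) (u v : G.V) :
    firstPassageSum F β n u v =
      ∑' μ, if μ.length = n ∧ IsFirstPassage μ u v then gibbsWeight β (G.Fsum F μ) else 0 :=
  tsum_subtype_eq_tsum_ite (fun μ : List G.E => μ.length = n ∧ IsFirstPassage μ u v) fun μ =>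
    gibbsWeight β (G.Fsum F μ)

theorem firstPassageSum_succ (n : ℕ) (u v : G.V) :
    firstPassageSum F β (n + 1) u v = ∑' e, gibbsWeight β (F e) *
      ∑' μ, if μ.length = n ∧ IsFirstPassage (e :: μ) u v
        then gibbsWeight β (G.Fsum F μ) else 0 := by
  rw [firstPassageSum_eq_tsum_ite, tsum_list_eq_add_tsum_cons]
  simp [← ENNReal.tsum_mul_left, Fsum_cons, gibbsWeight_add]

theorem firstPassageSum_one (u v : G.V) : firstPassageSum F β 1 u v = G.Amat F β u v := by
  rw [firstPassageSum_succ, Amat_eq_tsum_ite]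
  refine tsum_congr fun e => ?_
  rw [tsum_eq_single [] fun μ hμ => by simp [hμ]]
  simp [isFirstPassage_singleton, Fsum, gibbsWeight]

theorem firstPassageSum_add_two (n : ℕ) (u v : G.V) :
    firstPassageSum F β (n + 2) u v =
      ∑' x, G.Amat F β u x * if x = v then 0 else firstPassageSum F β (n + 1) x v := by
  rw [firstPassageSum_succ, tsum_Amat_mul]
  refine tsum_congr fun e => ?_
  have h_iff (μ : List G.E) : μ.length = n + 1 ∧ IsFirstPassage (e :: μ) u v ↔
      (G.s e = u ∧ G.r e ≠ v) ∧ μ.length = n + 1 ∧ IsFirstPassage μ (G.r e) v := by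
    rw [← and_left_comm, and_assoc]
    exact and_congr_right fun h => isFirstPassage_cons (List.ne_nil_of_length_eq_add_one h)
  by_cases hs : G.s e = u <;> by_cases hr : G.r e = v <;>
    simp [h_iff, hs, hr, firstPassageSum_eq_tsum_ite]

open Finset in
theorem Apow_succ_eq_sum_antidiagonal (n : ℕ) (u v : G.V) :
    G.Apow F β (n + 1) u v = ∑ p ∈ antidiagonal n,
      firstPassageSum F β (p.1 + 1) u v * G.Apow F β p.2 v v := by
  induction n generalizing u with
  | zero => simp [firstPassageSum_one, Apow]
  | succ n ih =>
    -- Single out the paths whose first edge already arrives at `v`.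
    have h_split (x : G.V) : G.Apow F β (n + 1) x v =
        (if x = v then G.Apow F β (n + 1) v v else 0) + ∑ p ∈ antidiagonal n,
          (if x = v then 0 else firstPassageSum F β (p.1 + 1) x v) * G.Apow F β p.2 v v := by
      split_ifs with hx
      · simp [hx]
      · simpa using ih x
    calc G.Apow F β (n + 2) u v
        = ∑' x, G.Amat F β u x * ((if x = v then G.Apow F β (n + 1) v v else 0) +
            ∑ p ∈ antidiagonal n,
              (if x = v then 0 else firstPassageSum F β (p.1 + 1) x v) * G.Apow F β p.2 v v) :=
          tsum_congr fun x => by rw [← h_split]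
      _ = G.Amat F β u v * G.Apow F β (n + 1) v v + ∑ p ∈ antidiagonal n,
            firstPassageSum F β (p.1 + 2) u v * G.Apow F β p.2 v v := by
          simp_rw [mul_add, ENNReal.tsum_add, mul_sum, firstPassageSum_add_two,
            ← ENNReal.tsum_mul_right, mul_assoc]
          rw [Summable.tsum_finsetSum fun _ _ => ENNReal.summable]
          simp
      _ = ∑ p ∈ antidiagonal (n + 1),
            firstPassageSum F β (p.1 + 1) u v * G.Apow F β p.2 v v := by
          rw [Nat.sum_antidiagonal_succ, zero_add, firstPassageSum_one]

theorem tsum_Apow_self (v : G.V) :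
    ∑' n, G.Apow F β n v v = (1 - ∑' k, G.loopSum F β v (k + 1))⁻¹ :=
  tsum_eq_inv_one_sub_tsum_of_renewal (by simp [Apow]) fun n => by
    simpa only [loopSum_eq_firstPassageSum] using Apow_succ_eq_sum_antidiagonal F β n v v

theorem tsum_Apow_self_eq_top_iff (v : G.V) :
    ∑' n, G.Apow F β n v v = ⊤ ↔ 1 ≤ ∑' k, G.loopSum F β v (k + 1) := by
  rw [tsum_Apow_self, ENNReal.inv_eq_top, tsub_eq_zero_iff_le]

variable {F β} in
theorem tsum_Apow_self_eq_top_of_isPathFrom {μ ν : List G.E} {u v : G.V}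
    (hμ : G.IsPathFrom μ v u) (hν : G.IsPathFrom ν u v) (hu : ∑' n, G.Apow F β n u u = ⊤) :
    ∑' n, G.Apow F β n v v = ⊤ := by
  rw [← top_le_iff]
  calc ⊤ = G.Apow F β μ.length v u * (∑' n, G.Apow F β n u u) * G.Apow F β ν.length u v := by
        rw [hu, ENNReal.mul_top hμ.Apow_length_ne_zero, ENNReal.top_mul hν.Apow_length_ne_zero]
    _ = ∑' n, G.Apow F β μ.length v u * G.Apow F β n u u * G.Apow F β ν.length u v := by
        rw [← ENNReal.tsum_mul_left, ← ENNReal.tsum_mul_right]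
    _ ≤ ∑' n, G.Apow F β (μ.length + n + ν.length) v v := by
        gcongr with n
        grw [Apow_mul_Apow_le, Apow_mul_Apow_le]
    _ ≤ ∑' n, G.Apow F β n v v :=
        ENNReal.tsum_comp_le_tsum_of_injective
          (fun _ _ h => by simpa using h) fun n => G.Apow F β n v v

theorem recurrent_iff_exists_one_le_tsum_loopSum :
    G.Recurrent F β ↔ ∃ v : G.V, 1 ≤ ∑' k, G.loopSum F β v (k + 1) := by
  simp only [Recurrent, tsum_Apow_self_eq_top_iff]

theorem StronglyConnected.recurrent_iff_forall_one_le_tsum_loopSum [Nonempty G.V]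
    (hG : G.StronglyConnected) :
    G.Recurrent F β ↔ ∀ v : G.V, 1 ≤ ∑' k, G.loopSum F β v (k + 1) := by
  simp only [← tsum_Apow_self_eq_top_iff]
  refine ⟨fun ⟨u, hu⟩ v => ?_, fun h => ⟨Classical.arbitrary G.V, h _⟩⟩
  obtain ⟨μ, hμ⟩ := hG v u
  obtain ⟨ν, hν⟩ := hG u v
  exact tsum_Apow_self_eq_top_of_isPathFrom hμ hν hu

theorem transient_iff_not_recurrent : G.Transient F β ↔ ¬ G.Recurrent F β := by
  simp only [Transient, Recurrent, not_exists, ne_eq]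

end DirGraph

/-- recurrence/transience criterion in terms of simple loops. -/
theorem stmt_12 (G : DirGraph) [Nonempty G.V] (hSC : G.StronglyConnected)
    (F : G.E → ℝ) (β : ℝ) :
    (G.Recurrent F β ↔ ∃ v : G.V, 1 ≤ ∑' k : ℕ, G.loopSum F β v (k + 1)) ∧
    (G.Recurrent F β ↔ ∀ v : G.V, 1 ≤ ∑' k : ℕ, G.loopSum F β v (k + 1)) ∧
    (G.Transient F β ↔ ∃ v : G.V, ∑' k : ℕ, G.loopSum F β v (k + 1) < 1) ∧
    (G.Transient F β ↔ ∀ v : G.V, ∑' k : ℕ, G.loopSum F β v (k + 1) < 1) := by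
  have h_exists := DirGraph.recurrent_iff_exists_one_le_tsum_loopSum F β
  have h_forall := hSC.recurrent_iff_forall_one_le_tsum_loopSum F β
  refine ⟨h_exists, h_forall, ?_, ?_⟩
  · rw [DirGraph.transient_iff_not_recurrent, h_forall]
    simp only [not_forall, not_le]
  · rw [DirGraph.transient_iff_not_recurrent, h_exists]
    simp only [not_exists, not_le]
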